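/- arXiv:1701.05575 — 8 statements merged into one kernel-verified Lean document; each statement's English description precedes it below -/
import Mathlib

section
/- Let E be a real Banach space and let g : E × ℝ → ℝ be continuous such that the map G : E × ℝ → E × ℝ defined by G(e,t) = (e, g(e,t)) is proper. Assume that no point of E × ℝ has three distinct preimages under G, and that some point of E × ℝ has two distinct preimages under G. Then G is a global fold: there exist homeomorphisms σ₁, σ₂ : E × ℝ → E × ℝ, each of the form σᵢ(e,t) = (e, gᵢ(e,t)) for continuous functions gᵢ : E × ℝ → ℝ, such that (σ₂ ∘ G ∘ σ₁)(e,t) = (e, −|t|) for all (e,t) ∈ E × ℝ. -/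
open Set Filter Topology

lemma aux_ivt {f : ℝ → ℝ} (hf : Continuous f) {x y v : ℝ} (hxy : x < y)
    (h : (f x < v ∧ v < f y) ∨ (f y < v ∧ v < f x)) : ∃ z, x < z ∧ z < y ∧ f z = v := by
  rcases h with h | h
  · obtain ⟨z, hz, e⟩ := intermediate_value_Ioo hxy.le hf.continuousOn h
    exact ⟨z, hz.1, hz.2, e⟩
  · obtain ⟨z, hz, e⟩ := intermediate_value_Ioo' hxy.le hf.continuousOn h
    exact ⟨z, hz.1, hz.2, e⟩

lemma aux_inj {f : ℝ → ℝ} (hf : Continuous f)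
    (h3 : ∀ a b c, a < b → b < c → f a = f b → f b = f c → False)
    (ht : Tendsto f atTop atTop) (hb : Tendsto f atBot atBot) {a b : ℝ} (hab : a < b)
    (he : f a = f b) : False := by
  obtain ⟨x, hax, hxb⟩ := exists_between hab
  rcases lt_trichotomy (f x) (f a) with h | h | h
  · obtain ⟨v, h1, h2⟩ := exists_between h
    obtain ⟨w, hw1, hw2⟩ := ((hb.eventually_lt_atBot v).and (eventually_lt_atBot a)).exists
    obtain ⟨p, hp1, hp2, hp3⟩ := aux_ivt hf hw2 (v := v) (Or.inl ⟨hw1, h2⟩)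
    obtain ⟨q, hq1, hq2, hq3⟩ := aux_ivt hf hax (v := v) (Or.inr ⟨h1, h2⟩)
    obtain ⟨r, hr1, hr2, hr3⟩ := aux_ivt hf hxb (v := v) (Or.inl ⟨h1, he ▸ h2⟩)
    exact h3 p q r (by linarith) (by linarith) (by linarith) (by linarith)
  · exact h3 a x b hax hxb h.symm (by linarith)
  · obtain ⟨v, h1, h2⟩ := exists_between h
    obtain ⟨w, hw1, hw2⟩ := ((ht.eventually_gt_atTop v).and (eventually_gt_atTop b)).exists
    obtain ⟨p, hp1, hp2, hp3⟩ := aux_ivt hf hw2 (v := v) (Or.inl ⟨he ▸ h1, hw1⟩)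
    obtain ⟨q, hq1, hq2, hq3⟩ := aux_ivt hf hax (v := v) (Or.inl ⟨h1, h2⟩)
    obtain ⟨r, hr1, hr2, hr3⟩ := aux_ivt hf hxb (v := v) (Or.inr ⟨he ▸ h1, h2⟩)
    exact h3 q r p (by linarith) (by linarith) (by linarith) (by linarith)

lemma aux_mono {f : ℝ → ℝ} (hf : Continuous f)
    (h3 : ∀ a b c, a < b → b < c → f a = f b → f b = f c → False)
    (ht : Tendsto f atTop atBot) (hb : Tendsto f atBot atBot) {m : ℝ} (hm : ∀ x, f x ≤ f m) :
    StrictMonoOn f (Iic m) := by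
  have key : ∀ a b, a < b → b ≤ m → f a ≠ f b := by
    intro a b hab hbm he
    rcases (hm a).lt_or_eq with h | h
    · have hbm' : b < m := by
        rcases hbm.lt_or_eq with h' | h'
        · exact h'
        · subst h'; linarith
      obtain ⟨w, hw1, hw2⟩ := ((ht.eventually_lt_atBot (f a)).and (eventually_gt_atTop m)).exists
      obtain ⟨p, hp1, hp2, hp3⟩ := aux_ivt hf hw2 (v := f a) (Or.inr ⟨hw1, h⟩)
      exact h3 a b p hab (by linarith) he (by linarith)
    · obtain ⟨x, hax, hxb⟩ := exists_between hab
      rcases (hm x).lt_or_eq with hx | hx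
      · obtain ⟨w, hw1, hw2⟩ := ((ht.eventually_lt_atBot (f x)).and (eventually_gt_atTop b)).exists
        obtain ⟨p, hp1, hp2, hp3⟩ := aux_ivt hf hw2 (v := f x) (Or.inr ⟨hw1, by linarith⟩)
        obtain ⟨u, hu1, hu2⟩ := ((hb.eventually_lt_atBot (f x)).and (eventually_lt_atBot a)).exists
        obtain ⟨q, hq1, hq2, hq3⟩ := aux_ivt hf hu2 (v := f x) (Or.inl ⟨hu1, by linarith⟩)
        exact h3 q x p (by linarith) (by linarith) (by linarith) (by linarith)
      · exact h3 a x b hax hxb (by linarith) (by linarith)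
  intro a ha b hbm hab
  by_contra hcon
  push Not at hcon
  rcases hcon.lt_or_eq with h | h
  · obtain ⟨x, hx, he⟩ := intermediate_value_Icc (show b ≤ m from hbm) hf.continuousOn ⟨h.le, hm a⟩
    exact key a x (lt_of_lt_of_le hab hx.1) hx.2 he.symm
  · exact key a b hab hbm h.symm

lemma aux_unimodal {f : ℝ → ℝ} (hf : Continuous f)
    (h3 : ∀ a b c, a < b → b < c → f a = f b → f b = f c → False)
    (ht : Tendsto f atTop atBot) (hb : Tendsto f atBot atBot) :
    ∃ m, StrictMonoOn f (Iic m) ∧ StrictAntiOn f (Ici m) := by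
  obtain ⟨m, hm⟩ := hf.exists_forall_ge (by
    rw [cocompact_eq_atBot_atTop]; exact hb.sup ht)
  refine ⟨m, aux_mono hf h3 ht hb hm, ?_⟩
  have := aux_mono (f := fun x => f (-x)) (m := -m) (by fun_prop)
    (fun a b c hab hbc h1 h2 => h3 (-c) (-b) (-a) (by linarith) (by linarith) h2.symm h1.symm)
    (hb.comp tendsto_neg_atTop_atBot) (ht.comp tendsto_neg_atBot_atTop) (by
      intro x; simpa using hm (-x))
  intro a ha b hb hab
  have := this (a := -b) (by simpa using hb) (b := -a) (by simpa using ha) (by linarith)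
  simpa using this

lemma aux_homeo {E : Type*} [TopologicalSpace E] (h : E × ℝ → ℝ) (hc : Continuous h)
    (hm : ∀ e, StrictMono fun t => h (e, t)) (hs : ∀ e, Function.Surjective fun t => h (e, t)) :
    ∃ Φ : (E × ℝ) ≃ₜ (E × ℝ), ∀ p, Φ p = (p.1, h p) := by
  choose k hk using hs
  simp only at hk
  have hk' : ∀ e t, k e (h (e, t)) = t := fun e t => (hm e).injective (hk e _)
  refine ⟨{ toFun := fun p => (p.1, h p)
            invFun := fun p => (p.1, k p.1 p.2)
            left_inv := fun p => by simp [hk']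
            right_inv := fun p => by simp [hk]
            continuous_toFun := by fun_prop
            continuous_invFun := ?_ }, fun p => rfl⟩
  refine continuous_fst.prodMk ?_
  rw [continuous_iff_continuousAt]
  rintro ⟨e, s⟩
  refine tendsto_order.2 ⟨fun a ha => ?_, fun a ha => ?_⟩
  · have h1 : h (e, a) < s := by
      have := hm e ha
      simpa [hk] using this
    have : ∀ᶠ p : E × ℝ in 𝓝 (e, s), h (p.1, a) < p.2 :=
      (isOpen_lt (by fun_prop) (by fun_prop)).mem_nhds h1
    filter_upwards [this] with p hp
    rw [← (hm p.1).lt_iff_lt]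
    simpa [hk] using hp
  · have h1 : s < h (e, a) := by
      have := hm e ha
      simpa [hk] using this
    have : ∀ᶠ p : E × ℝ in 𝓝 (e, s), p.2 < h (p.1, a) :=
      (isOpen_lt (by fun_prop) (by fun_prop)).mem_nhds h1
    filter_upwards [this] with p hp
    rw [← (hm p.1).lt_iff_lt]
    simpa [hk] using hp

lemma aux_core {E : Type*} [TopologicalSpace E] (g : E × ℝ → ℝ) (hg : Continuous g)
    (h3 : ∀ e a b c, a < b → b < c → g (e, a) = g (e, b) → g (e, b) = g (e, c) → False)
    (ht : ∀ e, Tendsto (fun t => g (e, t)) atTop atBot)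
    (hb : ∀ e, Tendsto (fun t => g (e, t)) atBot atBot) :
    ∃ (M : E → ℝ) (Φ : (E × ℝ) ≃ₜ (E × ℝ)), Continuous M ∧ (∀ p, (Φ p).1 = p.1) ∧
      ∀ p, g p - M p.1 = - |(Φ p).2| := by
  choose m hmono hanti using fun e => aux_unimodal (f := fun t => g (e, t)) (by fun_prop)
    (h3 e) (ht e) (hb e)
  have hmax : ∀ e t, g (e, t) ≤ g (e, m e) := by
    intro e t
    rcases le_total t (m e) with h | h
    · exact (hmono e).monotoneOn h self_mem_Iic h
    · exact (hanti e).antitoneOn self_mem_Ici h h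
  have hmc : Continuous m := by
    rw [continuous_iff_continuousAt]
    intro e
    refine tendsto_order.2 ⟨fun a ha => ?_, fun a ha => ?_⟩
    · have h1 : g (e, a) < g (e, m e) := hmono e ha.le self_mem_Iic ha
      have : ∀ᶠ x in 𝓝 e, g (x, a) < g (x, m e) :=
        (isOpen_lt (by fun_prop) (by fun_prop)).mem_nhds h1
      filter_upwards [this] with x hx
      by_contra hcon
      push Not at hcon
      exact absurd hx (not_lt.2 ((hanti x).antitoneOn hcon (hcon.trans ha.le) ha.le))
    · have h1 : g (e, a) < g (e, m e) := hanti e self_mem_Ici ha.le ha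
      have : ∀ᶠ x in 𝓝 e, g (x, a) < g (x, m e) :=
        (isOpen_lt (by fun_prop) (by fun_prop)).mem_nhds h1
      filter_upwards [this] with x hx
      by_contra hcon
      push Not at hcon
      exact absurd hx (not_lt.2 ((hmono x).monotoneOn (ha.le.trans hcon) hcon ha.le))
  let h : E × ℝ → ℝ := fun p => if p.2 ≤ m p.1 then g p - g (p.1, m p.1)
    else g (p.1, m p.1) - g p
  have hc : Continuous h := by
    refine Continuous.if_le (by fun_prop) (by fun_prop) (by fun_prop) (by fun_prop) ?_
    rintro ⟨e, t⟩ (rfl : t = m e)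
    simp
  have hle : ∀ e t, t ≤ m e → h (e, t) = g (e, t) - g (e, m e) := fun e t h' => if_pos h'
  have hlt : ∀ e t, m e < t → h (e, t) = g (e, m e) - g (e, t) := fun e t h' => if_neg h'.not_ge
  have hsm : ∀ e, StrictMono fun t => h (e, t) := by
    intro e a b hab
    simp only
    rcases le_or_gt b (m e) with hb' | hb'
    · rw [hle e b hb', hle e a (hab.le.trans hb')]
      have := hmono e (hab.le.trans hb') hb' hab
      simp only at this
      linarith
    · have h1 : g (e, b) < g (e, m e) := hanti e self_mem_Ici hb'.le hb'
      rw [hlt e b hb']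
      rcases le_or_gt a (m e) with ha | ha
      · rw [hle e a ha]
        linarith [hmax e a]
      · rw [hlt e a ha]
        have := hanti e ha.le hb'.le hab
        simp only at this
        linarith
  have hsur : ∀ e, Function.Surjective fun t => h (e, t) := by
    intro e
    refine Continuous.surjective (by fun_prop) ?_ ?_
    · refine Tendsto.congr' (f₁ := fun t => g (e, m e) + - g (e, t)) ?_ ?_
      · filter_upwards [eventually_gt_atTop (m e)] with t h'
        rw [hlt e t h']; ring
      · exact tendsto_atTop_add_const_left _ _ (tendsto_neg_atBot_atTop.comp (ht e))
    · refine Tendsto.congr' (f₁ := fun t => - g (e, m e) + g (e, t)) ?_ ?_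
      · filter_upwards [eventually_le_atBot (m e)] with t h'
        rw [hle e t h']; ring
      · exact tendsto_atBot_add_const_left _ _ (hb e)
  obtain ⟨Φ, hΦ⟩ := aux_homeo h hc hsm hsur
  refine ⟨fun e => g (e, m e), Φ, by fun_prop, fun p => by rw [hΦ], ?_⟩
  rintro ⟨e, t⟩
  rw [hΦ]
  simp only
  have := hmax e t
  rcases le_or_gt t (m e) with h' | h'
  · rw [hle e t h', abs_of_nonpos (by linarith)]; ring
  · rw [hlt e t h', abs_of_nonneg (by linarith)]; ring

lemma aux_fold {E : Type*} [TopologicalSpace E] (g : E × ℝ → ℝ) (hg : Continuous g)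
    (h3 : ∀ e a b c, a < b → b < c → g (e, a) = g (e, b) → g (e, b) = g (e, c) → False)
    (H : (∀ e, Tendsto (fun t => g (e, t)) atTop atBot ∧ Tendsto (fun t => g (e, t)) atBot atBot) ∨
      (∀ e, Tendsto (fun t => g (e, t)) atTop atTop ∧ Tendsto (fun t => g (e, t)) atBot atTop)) :
    ∃ σ₁ σ₂ : (E × ℝ) ≃ₜ (E × ℝ),
      (∀ p : E × ℝ, (σ₁ p).1 = p.1) ∧ (∀ p : E × ℝ, (σ₂ p).1 = p.1) ∧
      ∀ (e : E) (t : ℝ), σ₂ (e, g (σ₁ (e, t))) = (e, -|t|) := by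
  rcases H with H | H
  · obtain ⟨M, Φ, hM, h1, hh⟩ := aux_core g hg h3 (fun e => (H e).1) (fun e => (H e).2)
    have h1' : ∀ p, (Φ.symm p).1 = p.1 := fun p => by
      have := h1 (Φ.symm p); simpa using this.symm
    refine ⟨Φ.symm, { toFun := fun p => (p.1, p.2 - M p.1)
                      invFun := fun p => (p.1, p.2 + M p.1)
                      left_inv := fun p => by simp
                      right_inv := fun p => by simp
                      continuous_toFun := by fun_prop
                      continuous_invFun := by fun_prop }, h1', fun p => rfl, ?_⟩
    intro e t
    have := hh (Φ.symm (e, t))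
    rw [h1'] at this
    simpa using this
  · obtain ⟨M, Φ, hM, h1, hh⟩ := aux_core (fun p => - g p) hg.neg
      (fun e a b c hab hbc x y => h3 e a b c hab hbc (neg_injective x) (neg_injective y))
      (fun e => tendsto_neg_atTop_atBot.comp (H e).1)
      (fun e => tendsto_neg_atTop_atBot.comp (H e).2)
    have h1' : ∀ p, (Φ.symm p).1 = p.1 := fun p => by
      have := h1 (Φ.symm p); simpa using this.symm
    refine ⟨Φ.symm, { toFun := fun p => (p.1, - p.2 - M p.1)
                      invFun := fun p => (p.1, - (p.2 + M p.1))
                      left_inv := fun p => by simp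
                      right_inv := fun p => by simp
                      continuous_toFun := by fun_prop
                      continuous_invFun := by fun_prop }, h1', fun p => rfl, ?_⟩
    intro e t
    have := hh (Φ.symm (e, t))
    rw [h1'] at this
    simpa using this

lemma aux_end {E : Type*} [TopologicalSpace E] (g : E × ℝ → ℝ) (hg : Continuous g) (K : Set E)
    (hK : IsPreconnected K)
    (hT : ∀ R : ℝ, ∃ T : ℝ, ∀ e ∈ K, ∀ t, T < t → R < |g (e, t)|) :
    (∀ e ∈ K, Tendsto (fun t => g (e, t)) atTop atTop) ∨
    (∀ e ∈ K, Tendsto (fun t => g (e, t)) atTop atBot) := by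
  obtain ⟨T, hT0⟩ := hT 0
  have hpc : IsPreconnected (g '' (K ×ˢ Ioi T)) :=
    (hK.prod isPreconnected_Ioi).image _ hg.continuousOn
  have hne : (0 : ℝ) ∉ g '' (K ×ˢ Ioi T) := by
    rintro ⟨⟨e, t⟩, ⟨he, ht⟩, h0⟩
    have := hT0 e he t ht
    rw [h0] at this
    simp at this
  have hoc := hpc.ordConnected
  by_cases hpos : ∀ e ∈ K, ∀ t, T < t → 0 < g (e, t)
  · left
    intro e he
    refine tendsto_atTop.2 fun R => ?_
    obtain ⟨S, hS⟩ := hT R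
    filter_upwards [eventually_gt_atTop S, eventually_gt_atTop T] with t h1 h2
    have := hS e he t h1
    rw [abs_of_pos (hpos e he t h2)] at this
    exact this.le
  · right
    push Not at hpos
    obtain ⟨e0, he0, t0, ht0, hn⟩ := hpos
    have hneg : ∀ e ∈ K, ∀ t, T < t → g (e, t) < 0 := by
      intro e he t ht
      by_contra hcon
      push Not at hcon
      exact hne (hoc.out ⟨(e0, t0), ⟨he0, ht0⟩, rfl⟩ ⟨(e, t), ⟨he, ht⟩, rfl⟩ ⟨hn, hcon⟩)
    intro e he
    refine tendsto_atBot.2 fun R => ?_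
    obtain ⟨S, hS⟩ := hT (-R)
    filter_upwards [eventually_gt_atTop S, eventually_gt_atTop T] with t h1 h2
    have := hS e he t h1
    rw [abs_of_neg (hneg e he t h2)] at this
    linarith


/-- **Global fold theorem.** Let `E` be a real Banach space and `g : E × ℝ → ℝ` continuous
such that `G (e,t) = (e, g (e,t))` is proper (preimages of compact sets are compact).
If no point has three distinct preimages under `G` and some point has two distinct preimages,
then `G` is a global fold: there are fiber-preserving homeomorphisms `σ₁, σ₂` of `E × ℝ`
with `(σ₂ ∘ G ∘ σ₁) (e, t) = (e, -|t|)`. -/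
theorem stmt0 {E : Type*} [NormedAddCommGroup E] [NormedSpace ℝ E] [CompleteSpace E]
    (g : E × ℝ → ℝ) (hg : Continuous g)
    (G : E × ℝ → E × ℝ) (hG : ∀ p : E × ℝ, G p = (p.1, g p))
    (hproper : ∀ K : Set (E × ℝ), IsCompact K → IsCompact (G ⁻¹' K))
    (hno3 : ∀ p q r : E × ℝ, G p = G q → G q = G r → p = q ∨ q = r ∨ p = r)
    (h2 : ∃ p q : E × ℝ, p ≠ q ∧ G p = G q) :
    ∃ σ₁ σ₂ : (E × ℝ) ≃ₜ (E × ℝ),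
      (∀ p : E × ℝ, (σ₁ p).1 = p.1) ∧ (∀ p : E × ℝ, (σ₂ p).1 = p.1) ∧
      ∀ (e : E) (t : ℝ), σ₂ (G (σ₁ (e, t))) = (e, -|t|) := by
  have h3 : ∀ e a b c, a < b → b < c → g (e, a) = g (e, b) → g (e, b) = g (e, c) → False := by
    intro e a b c hab hbc h1 h2
    rcases hno3 (e, a) (e, b) (e, c) (by simp [hG, h1]) (by simp [hG, h2]) with h | h | h <;>
      simp at h <;> linarith
  obtain ⟨e0, a, b, hab, he⟩ : ∃ e a b, a < b ∧ g (e, a) = g (e, b) := by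
    obtain ⟨⟨e, a⟩, ⟨e', b⟩, hne, hh⟩ := h2
    simp only [hG, Prod.mk.injEq] at hh
    obtain ⟨rfl, hh⟩ := hh
    rcases lt_trichotomy a b with h | h | h
    · exact ⟨e, a, b, h, hh⟩
    · exact absurd (by rw [h]) hne
    · exact ⟨e, b, a, h, hh.symm⟩
  have hT : ∀ K : Set E, IsCompact K → ∀ R : ℝ, ∃ T : ℝ, ∀ e ∈ K, ∀ t, T < |t| → R < |g (e, t)| := by
    intro K hK R
    have hc := (hproper _ (hK.prod (isCompact_Icc (a := -R) (b := R)))).image continuous_snd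
    obtain ⟨T, hT⟩ := hc.isBounded.exists_norm_le
    refine ⟨T, fun e he t ht => ?_⟩
    by_contra hcon
    push Not at hcon
    have := hT t ⟨(e, t), by simp [hG, he, abs_le.1 hcon], rfl⟩
    rw [Real.norm_eq_abs] at this
    linarith
  have hTop : ∀ e, (∀ x ∈ segment ℝ e0 e, Tendsto (fun t => g (x, t)) atTop atTop) ∨
      (∀ x ∈ segment ℝ e0 e, Tendsto (fun t => g (x, t)) atTop atBot) := by
    intro e
    have hcs : IsCompact (segment ℝ e0 e) := by
      rw [segment_eq_image_lineMap]
      exact isCompact_Icc.image (AffineMap.lineMap_continuous)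
    refine aux_end g hg _ (convex_segment _ _).isPreconnected fun R => ?_
    obtain ⟨T, hT⟩ := hT _ hcs R
    exact ⟨T, fun x hx t ht => hT x hx t (lt_of_lt_of_le ht (le_abs_self t))⟩
  have hBot : ∀ e, (∀ x ∈ segment ℝ e0 e, Tendsto (fun t => g (x, t)) atBot atTop) ∨
      (∀ x ∈ segment ℝ e0 e, Tendsto (fun t => g (x, t)) atBot atBot) := by
    intro e
    have hcs : IsCompact (segment ℝ e0 e) := by
      rw [segment_eq_image_lineMap]
      exact isCompact_Icc.image (AffineMap.lineMap_continuous)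
    have := aux_end (fun p => g (p.1, -p.2)) (by fun_prop) _
      (convex_segment (𝕜 := ℝ) e0 e).isPreconnected fun R => by
        obtain ⟨T, hT⟩ := hT _ hcs R
        exact ⟨T, fun x hx t ht => hT x hx (-t) (lt_of_lt_of_le ht (by
          rw [abs_neg]; exact le_abs_self t))⟩
    refine this.imp (fun h x hx => ?_) (fun h x hx => ?_)
    · simpa [Function.comp_def] using (h x hx).comp tendsto_neg_atBot_atTop
    · simpa [Function.comp_def] using (h x hx).comp tendsto_neg_atBot_atTop
  have nt : ∀ {l : Filter ℝ} [l.NeBot] {f : ℝ → ℝ}, Tendsto f l atTop → Tendsto f l atBot → False := by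
    intro l _ f h1 h2
    obtain ⟨x, hx, hy⟩ := ((h1.eventually_gt_atTop 0).and (h2.eventually_lt_atBot 0)).exists
    linarith
  have hl := fun e => left_mem_segment ℝ e0 e
  have hr := fun e => right_mem_segment ℝ e0 e
  have H : (∀ e, Tendsto (fun t => g (e, t)) atTop atBot ∧ Tendsto (fun t => g (e, t)) atBot atBot) ∨
      (∀ e, Tendsto (fun t => g (e, t)) atTop atTop ∧ Tendsto (fun t => g (e, t)) atBot atTop) := by
    rcases hTop e0 with p | p <;> rcases hBot e0 with q | q <;>
      replace p := p _ (hl _) <;> replace q := q _ (hl _)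
    · right
      intro e
      exact ⟨(hTop e).elim (fun h => h _ (hr _)) (fun h => (nt p (h _ (hl _))).elim),
        (hBot e).elim (fun h => h _ (hr _)) (fun h => (nt q (h _ (hl _))).elim)⟩
    · exact (aux_inj (f := fun t => g (e0, t)) (by fun_prop) (h3 e0) p q hab he).elim
    · exact (aux_inj (f := fun t => - g (e0, t)) (by fun_prop)
        (fun a b c hab hbc x y => h3 e0 a b c hab hbc (neg_injective x) (neg_injective y))
        (tendsto_neg_atBot_atTop.comp p) (tendsto_neg_atTop_atBot.comp q) hab (by simp [he])).elim
    · left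
      intro e
      exact ⟨(hTop e).elim (fun h => (nt (h _ (hl _)) p).elim) (fun h => h _ (hr _)),
        (hBot e).elim (fun h => (nt (h _ (hl _)) q).elim) (fun h => h _ (hr _))⟩
  obtain ⟨σ₁, σ₂, h1, h2', h⟩ := aux_fold g hg h3 H
  refine ⟨σ₁, σ₂, h1, h2', fun e t => ?_⟩
  rw [hG, h1]
  exact h e t
end

section
/- Let h : ℝ → ℝ be a continuous function such that h(t) → −∞ as t → +∞ and h(t) → −∞ as t → −∞, and assume that no value of h is attained at three distinct points (for all t₁ < t₂ < t₃, h(t₁), h(t₂), h(t₃) are not all equal). Then there exists a unique T ∈ ℝ such that h is strictly increasing on (−∞, T] and strictly decreasing on [T, ∞); in particular, h attains its global maximum exactly at the point T. -/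
/-- A continuous function `h : ℝ → ℝ` tending to `-∞` at both `+∞` and `-∞`, no value of
which is attained at three distinct points, is strictly unimodal: there is a unique `T`
such that `h` is strictly increasing on `(-∞, T]` and strictly decreasing on `[T, ∞)`;
in particular `h` attains its global maximum exactly at `T`. -/
theorem stmt2 (h : ℝ → ℝ) (hc : Continuous h)
    (htop : Filter.Tendsto h Filter.atTop Filter.atBot)
    (hbot : Filter.Tendsto h Filter.atBot Filter.atBot)
    (hno3 : ¬ ∃ t₁ t₂ t₃ : ℝ, t₁ ≠ t₂ ∧ t₂ ≠ t₃ ∧ t₁ ≠ t₃ ∧ h t₁ = h t₂ ∧ h t₂ = h t₃) :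
    ∃! T : ℝ, StrictMonoOn h (Set.Iic T) ∧ StrictAntiOn h (Set.Ici T) ∧
      ∀ t : ℝ, t ≠ T → h t < h T := by
  have R : ∀ x v, v ≤ h x → ∃ y, x ≤ y ∧ h y = v := by
    intro x v hv
    obtain ⟨z, hz1, hz2⟩ := ((htop.eventually_le_atBot v).and
      (Filter.eventually_ge_atTop x)).exists
    obtain ⟨y, hy, e⟩ := intermediate_value_Icc' hz2 hc.continuousOn ⟨hz1, hv⟩
    exact ⟨y, hy.1, e⟩
  have L : ∀ x v, v ≤ h x → ∃ y, y ≤ x ∧ h y = v := by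
    intro x v hv
    obtain ⟨z, hz1, hz2⟩ := ((hbot.eventually_le_atBot v).and
      (Filter.eventually_le_atBot x)).exists
    obtain ⟨y, hy, e⟩ := intermediate_value_Icc hz2 hc.continuousOn ⟨hz1, hv⟩
    exact ⟨y, hy.2, e⟩
  have V : ∀ a b c, a < b → b < c → h b ≤ h a → h b ≤ h c → False := by
    intro a b c hab hbc h1 h2
    rcases h1.eq_or_lt with e | l1
    · obtain ⟨y, hy, e'⟩ := R c (h b) h2
      exact hno3 ⟨a, b, y, hab.ne, (hbc.trans_le hy).ne, (hab.trans (hbc.trans_le hy)).ne,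
        e.symm, e'.symm⟩
    rcases h2.eq_or_lt with e | l2
    · obtain ⟨y, hy, e'⟩ := L a (h b) h1
      exact hno3 ⟨y, b, c, (hy.trans_lt hab).ne, hbc.ne, (hy.trans_lt (hab.trans hbc)).ne,
        e', e⟩
    obtain ⟨v, hv1, hv2⟩ := exists_between (lt_min l1 l2)
    obtain ⟨hva, hvc⟩ := lt_min_iff.1 hv2
    obtain ⟨x, hx, ex⟩ := L a v hva.le
    obtain ⟨y, hy, ey⟩ := intermediate_value_Ioo' hab.le hc.continuousOn ⟨hv1, hva⟩
    obtain ⟨z, hz, ez⟩ := intermediate_value_Ioo hbc.le hc.continuousOn ⟨hv1, hvc⟩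
    have q1 : x < y := hx.trans_lt hy.1
    have q2 : y < z := hy.2.trans hz.1
    exact hno3 ⟨x, y, z, q1.ne, q2.ne, (q1.trans q2).ne, ex.trans ey.symm, ey.trans ez.symm⟩
  obtain ⟨T, hT⟩ := hc.exists_forall_ge (by
    rw [cocompact_eq_atBot_atTop]; exact hbot.sup htop)
  have M : ∀ t : ℝ, t ≠ T → h t < h T := by
    intro t ht
    refine lt_of_le_of_ne (hT t) fun e => ?_
    rcases ht.lt_or_gt with l | l
    · obtain ⟨m, m1, m2⟩ := exists_between l
      exact V t m T m1 m2 (e ▸ hT m) (hT m)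
    · obtain ⟨m, m1, m2⟩ := exists_between l
      exact V T m t m1 m2 (hT m) (e ▸ hT m)
  refine ⟨T, ⟨?_, ?_, M⟩, ?_⟩
  · intro x _ y hy hxy
    rcases (Set.mem_Iic.1 hy).eq_or_lt with e | l
    · subst e; exact M x hxy.ne
    · by_contra hn
      exact V x y T hxy l (not_lt.1 hn) (hT y)
  · intro x hx y _ hxy
    rcases (Set.mem_Ici.1 hx).eq_or_lt with e | l
    · subst e; exact M y hxy.ne'
    · by_contra hn
      exact V T x y l hxy (hT x) (not_lt.1 hn)
  · rintro S ⟨_, _, hS⟩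
    by_contra hne
    exact lt_asymm (M S hne) (hS T (Ne.symm hne))
end

section
/- Let h : ℝ → ℝ be continuous and proper (equivalently, |h(t)| → ∞ as |t| → ∞), and assume that no value of h is attained at three distinct points. Then one of the following four alternatives holds: (i) h is strictly increasing on ℝ; (ii) h is strictly decreasing on ℝ; (iii) there exists T ∈ ℝ such that h is strictly increasing on (−∞, T] and strictly decreasing on [T, ∞); (iv) there exists T ∈ ℝ such that h is strictly decreasing on (−∞, T] and strictly increasing on [T, ∞). -/
open Filter Set

def No3 (h : ℝ → ℝ) : Prop :=
  ¬ ∃ t₁ t₂ t₃ : ℝ, t₁ ≠ t₂ ∧ t₂ ≠ t₃ ∧ t₁ ≠ t₃ ∧ h t₁ = h t₂ ∧ h t₂ = h t₃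

lemma No3.neg {h : ℝ → ℝ} (H : No3 h) : No3 (fun t => - h t) := by
  rintro ⟨a, b, c, h1, h2, h3, h4, h5⟩
  exact H ⟨a, b, c, h1, h2, h3, neg_injective h4, neg_injective h5⟩

lemma No3.refl {h : ℝ → ℝ} (H : No3 h) : No3 (fun t => h (-t)) := by
  rintro ⟨a, b, c, h1, h2, h3, h4, h5⟩
  exact H ⟨-a, -b, -c, by simpa using h1, by simpa using h2, by simpa using h3, h4, h5⟩

lemma No3.lt {h : ℝ → ℝ} (H : No3 h) {a b c : ℝ} (hab : a < b) (hbc : b < c)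
    (h1 : h a = h b) (h2 : h b = h c) : False :=
  H ⟨a, b, c, hab.ne, hbc.ne, (hab.trans hbc).ne, h1, h2⟩

lemma ivt_up {h : ℝ → ℝ} (hc : Continuous h) {a b v : ℝ} (hab : a < b)
    (h1 : h a < v) (h2 : v < h b) : ∃ t, a < t ∧ t < b ∧ h t = v := by
  obtain ⟨t, ht, e⟩ := intermediate_value_Ioo hab.le hc.continuousOn ⟨h1, h2⟩
  exact ⟨t, ht.1, ht.2, e⟩

lemma ivt_down {h : ℝ → ℝ} (hc : Continuous h) {a b v : ℝ} (hab : a < b)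
    (h1 : v < h a) (h2 : h b < v) : ∃ t, a < t ∧ t < b ∧ h t = v := by
  obtain ⟨t, ht, e⟩ := intermediate_value_Ioo' hab.le hc.continuousOn ⟨h2, h1⟩
  exact ⟨t, ht.1, ht.2, e⟩

lemma far_right {h : ℝ → ℝ} (ht : Tendsto h atTop atTop) (y v : ℝ) : ∃ t, y < t ∧ v < h t :=
  ((eventually_gt_atTop y).and (ht.eventually_gt_atTop v)).exists

lemma far_left {h : ℝ → ℝ} (ht : Tendsto h atBot atTop) (y v : ℝ) : ∃ t, t < y ∧ v < h t :=
  ((eventually_lt_atBot y).and (ht.eventually_gt_atTop v)).exists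

lemma ends {h : ℝ → ℝ} (hc : Continuous h) (hp : Tendsto (fun t => |h t|) atTop atTop) :
    Tendsto h atTop atTop ∨ Tendsto h atTop atBot := by
  obtain ⟨N, hN⟩ := eventually_atTop.1 (hp.eventually_gt_atTop 0)
  have hne : ∀ t, N ≤ t → h t ≠ 0 := fun t ht => abs_pos.1 (hN t ht)
  rcases lt_or_gt_of_ne (hne N le_rfl) with h0 | h0
  · right
    have : ∀ t, N ≤ t → h t < 0 := by
      intro t ht
      by_contra hh
      obtain ⟨s, hs, e⟩ := intermediate_value_Icc ht hc.continuousOn ⟨h0.le, not_lt.1 hh⟩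
      exact hne s hs.1 e
    rw [← tendsto_neg_atTop_iff]
    refine hp.congr' ?_
    filter_upwards [eventually_ge_atTop N] with t ht
    exact abs_of_neg (this t ht)
  · left
    have : ∀ t, N ≤ t → 0 < h t := by
      intro t ht
      by_contra hh
      obtain ⟨s, hs, e⟩ := intermediate_value_Icc' ht hc.continuousOn ⟨not_lt.1 hh, h0.le⟩
      exact hne s hs.1 e
    refine hp.congr' ?_
    filter_upwards [eventually_ge_atTop N] with t ht
    exact abs_of_pos (this t ht)

lemma half {h : ℝ → ℝ} (hc : Continuous h) (H : No3 h) (hr : Tendsto h atTop atTop)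
    (hl : Tendsto h atBot atTop) {T : ℝ} (hT : ∀ t, h T ≤ h t) : StrictMonoOn h (Ici T) := by
  intro x hx y hy hxy
  by_contra hh
  rw [not_lt] at hh
  rw [mem_Ici] at hx hy
  rcases (hT x).eq_or_lt with e | hlt
  · have ey : h y = h x := le_antisymm hh (e ▸ hT y)
    obtain ⟨z, hxz, hzy⟩ := exists_between hxy
    have hz : h x < h z := by
      refine lt_of_le_of_ne (e ▸ hT z) fun e' => ?_
      exact H.lt hxz hzy e' (e'.symm.trans ey.symm)
    obtain ⟨v, hv1, hv2⟩ := exists_between hz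
    obtain ⟨w, hw, hw'⟩ := far_right hr y v
    obtain ⟨a, a1, a2, a3⟩ := ivt_up hc hxz hv1 hv2
    obtain ⟨b, b1, b2, b3⟩ := ivt_down hc hzy hv2 (ey ▸ hv1)
    obtain ⟨c, c1, c2, c3⟩ := ivt_up hc hw (ey ▸ hv1) hw'
    exact H.lt (a2.trans b1) (b2.trans c1) (a3.trans b3.symm) (b3.trans c3.symm)
  · have hTx : T < x := lt_of_le_of_ne hx fun e => by simp [e] at hlt
    rcases hh.eq_or_lt with e | hlt2
    · obtain ⟨w, hw, hw'⟩ := far_left hl T (h x)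
      obtain ⟨c, c1, c2, c3⟩ := ivt_down hc hw hw' hlt
      exact H.lt (c2.trans hTx) hxy c3 e.symm
    · obtain ⟨v, hv1, hv2⟩ := exists_between hlt2
      obtain ⟨w, hw, hw'⟩ := far_right hr y v
      obtain ⟨a, a1, a2, a3⟩ := ivt_up hc hTx ((hT y).trans_lt hv1) hv2
      obtain ⟨b, b1, b2, b3⟩ := ivt_down hc hxy hv2 hv1
      obtain ⟨c, c1, c2, c3⟩ := ivt_up hc hw hv1 hw'
      exact H.lt (a2.trans b1) (b2.trans c1) (a3.trans b3.symm) (b3.trans c3.symm)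

lemma valley {h : ℝ → ℝ} (hc : Continuous h) (H : No3 h) (hr : Tendsto h atTop atTop)
    (hl : Tendsto h atBot atTop) : ∃ T, StrictAntiOn h (Iic T) ∧ StrictMonoOn h (Ici T) := by
  obtain ⟨T, hT⟩ := hc.exists_forall_le (by
    rw [cocompact_eq_atBot_atTop]; exact hl.sup hr)
  refine ⟨T, ?_, half hc H hr hl hT⟩
  have := half (h := fun t => h (-t)) (hc.comp continuous_neg) H.refl
    (hl.comp tendsto_neg_atTop_atBot) (hr.comp tendsto_neg_atBot_atTop) (T := -T)
    (by intro t; simpa using hT (-t))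
  intro x hx y hy hxy
  have := this (a := -y) (by simpa using hy) (b := -x) (by simpa using hx) (by simpa using hxy)
  simpa using this

lemma inj {h : ℝ → ℝ} (hc : Continuous h) (H : No3 h) (hr : Tendsto h atTop atTop)
    (hl : Tendsto h atBot atBot) : Function.Injective h := by
  suffices ∀ a b, a < b → h a ≠ h b by
    intro a b e
    rcases lt_trichotomy a b with hlt | rfl | hlt
    · exact (this _ _ hlt e).elim
    · rfl
    · exact (this _ _ hlt e.symm).elim
  intro x y hxy e
  obtain ⟨z, hxz, hzy⟩ := exists_between hxy
  rcases lt_trichotomy (h x) (h z) with hz | e' | hz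
  · obtain ⟨v, hv1, hv2⟩ := exists_between hz
    obtain ⟨w, hw, hw'⟩ := far_right hr y v
    obtain ⟨a, a1, a2, a3⟩ := ivt_up hc hxz hv1 hv2
    obtain ⟨b, b1, b2, b3⟩ := ivt_down hc hzy hv2 (e ▸ hv1)
    obtain ⟨c, c1, c2, c3⟩ := ivt_up hc hw (e ▸ hv1) hw'
    exact H.lt (a2.trans b1) (b2.trans c1) (a3.trans b3.symm) (b3.trans c3.symm)
  · exact H.lt hxz hzy e' (e'.symm.trans e)
  · obtain ⟨v, hv1, hv2⟩ := exists_between hz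
    obtain ⟨w, hw, hw'⟩ := ((eventually_lt_atBot x).and (hl.eventually_lt_atBot v)).exists
    obtain ⟨a, a1, a2, a3⟩ := ivt_up hc hw hw' hv2
    obtain ⟨b, b1, b2, b3⟩ := ivt_down hc hxz hv2 hv1
    obtain ⟨c, c1, c2, c3⟩ := ivt_up hc hzy hv1 (e ▸ hv2)
    exact H.lt (a2.trans b1) (b2.trans c1) (a3.trans b3.symm) (b3.trans c3.symm)

/-- A continuous proper function `h : ℝ → ℝ` (`|h t| → ∞` as `|t| → ∞`), no value of which
is attained at three distinct points, is of one of four topological types: strictly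
increasing, strictly decreasing, strictly unimodal with a maximum, or strictly unimodal
with a minimum. -/
theorem stmt3 (h : ℝ → ℝ) (hc : Continuous h)
    (hproper : Filter.Tendsto (fun t => |h t|) (Filter.cocompact ℝ) Filter.atTop)
    (hno3 : ¬ ∃ t₁ t₂ t₃ : ℝ, t₁ ≠ t₂ ∧ t₂ ≠ t₃ ∧ t₁ ≠ t₃ ∧ h t₁ = h t₂ ∧ h t₂ = h t₃) :
    StrictMono h ∨ StrictAnti h ∨
    (∃ T : ℝ, StrictMonoOn h (Set.Iic T) ∧ StrictAntiOn h (Set.Ici T)) ∨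
    (∃ T : ℝ, StrictAntiOn h (Set.Iic T) ∧ StrictMonoOn h (Set.Ici T)) := by
  have H : No3 h := hno3
  rw [cocompact_eq_atBot_atTop, tendsto_sup] at hproper
  obtain ⟨pl, pr⟩ := hproper
  have hl : Tendsto h atBot atTop ∨ Tendsto h atBot atBot := by
    have key : ∀ l : Filter ℝ, Tendsto (fun t => h (-t)) atTop l → Tendsto h atBot l := by
      intro l hh
      have := hh.comp tendsto_neg_atBot_atTop
      simpa [Function.comp_def] using this
    exact (ends (h := fun t => h (-t)) (hc.comp continuous_neg)
      (pl.comp tendsto_neg_atTop_atBot)).imp (key _) (key _)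
  rcases ends hc pr with hr | hr <;> rcases hl with hl | hl
  · exact Or.inr (Or.inr (Or.inr (valley hc H hr hl)))
  · rcases hc.strictMono_of_inj (inj hc H hr hl) with m | m
    · exact Or.inl m
    · exact Or.inr (Or.inl m)
  · have i : Function.Injective h := by
      have := inj hc.neg H.neg (tendsto_neg_atTop_iff.2 hr) (tendsto_neg_atBot_iff.2 hl)
      intro a b e
      exact this (congrArg Neg.neg e)
    rcases hc.strictMono_of_inj i with m | m
    · exact Or.inl m
    · exact Or.inr (Or.inl m)
  · obtain ⟨T, h1, h2⟩ := valley hc.neg H.neg (tendsto_neg_atTop_iff.2 hr)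
      (tendsto_neg_atTop_iff.2 hl)
    refine Or.inr (Or.inr (Or.inl ⟨T, ?_, ?_⟩))
    · intro x hx y hy hxy
      exact neg_lt_neg_iff.1 (h1 hx hy hxy)
    · intro x hx y hy hxy
      exact neg_lt_neg_iff.1 (h2 hx hy hxy)
end

section
/- Let E be a metric space and let g : E × ℝ → ℝ be continuous such that the map G : E × ℝ → E × ℝ defined by G(e,t) = (e, g(e,t)) is proper. If for some e₀ ∈ E one has g(e₀,t) → −∞ as t → +∞, then there exists a neighborhood N of e₀ in E such that for every e ∈ N, g(e,t) → −∞ as t → +∞. -/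
/-- If `G (e,t) = (e, g (e,t))` is a proper fiber-preserving continuous map on `E × ℝ`
(`E` a metric space) and `g (e₀, t) → -∞` as `t → +∞` for some `e₀`, then the same holds
for all `e` in a neighborhood of `e₀`. -/
theorem stmt5 {E : Type*} [MetricSpace E]
    (g : E × ℝ → ℝ) (hg : Continuous g)
    (G : E × ℝ → E × ℝ) (hG : ∀ p : E × ℝ, G p = (p.1, g p))
    (hproper : ∀ K : Set (E × ℝ), IsCompact K → IsCompact (G ⁻¹' K))
    (e₀ : E) (h₀ : Filter.Tendsto (fun t => g (e₀, t)) Filter.atTop Filter.atBot) :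
    ∃ N ∈ nhds e₀, ∀ e ∈ N, Filter.Tendsto (fun t => g (e, t)) Filter.atTop Filter.atBot := by
  have hGc : Continuous G := by
    have : G = fun p => (p.1, g p) := funext hG
    rw [this]; fun_prop
  have hP : IsProperMap G :=
    isProperMap_iff_isCompact_preimage.2 ⟨hGc, fun K hK => hproper K hK⟩
  obtain ⟨T, hT⟩ := Filter.eventually_atTop.1 (h₀.eventually (Filter.eventually_lt_atBot 0))
  have hC : IsClosed (G '' {p | T ≤ p.2}) :=
    hP.isClosedMap _ (isClosed_le continuous_const continuous_snd)
  have hO : IsOpen ((fun e : E => (e, (0:ℝ))) ⁻¹' (G '' {p | T ≤ p.2})ᶜ) :=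
    hC.isOpen_compl.preimage (by fun_prop)
  have hO2 : IsOpen {e : E | g (e, T) < 0} :=
    isOpen_lt (by fun_prop) continuous_const
  refine ⟨_, Filter.inter_mem (hO.mem_nhds ?_) (hO2.mem_nhds (hT T le_rfl)), ?_⟩
  · rintro ⟨⟨e, t⟩, ht, h⟩
    rw [hG] at h
    simp only [Prod.mk.injEq] at h
    obtain ⟨rfl, h⟩ := h
    have := hT t ht
    linarith
  · rintro e ⟨h1, h2⟩
    have hneg : ∀ t, T ≤ t → g (e, t) < 0 := by
      intro t ht
      by_contra! hc
      have hcont : ContinuousOn (fun t => g (e, t)) (Set.Icc T t) := by fun_prop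
      obtain ⟨s, hs, hs0⟩ := intermediate_value_Icc ht hcont ⟨le_of_lt h2, hc⟩
      exact h1 ⟨(e, s), hs.1, by rw [hG]; exact Prod.ext rfl hs0⟩
    rw [Filter.tendsto_atBot]
    intro b
    have hK := hproper ({e} ×ˢ Set.Icc b 0) (isCompact_singleton.prod isCompact_Icc)
    obtain ⟨M, hM⟩ := (hK.image continuous_snd).bddAbove
    filter_upwards [Filter.eventually_ge_atTop T, Filter.eventually_gt_atTop M] with t ht hMt
    by_contra! hc
    have : t ≤ M := hM ⟨(e, t), by
      rw [Set.mem_preimage, hG]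
      exact ⟨rfl, hc.le, (hneg t ht).le⟩, rfl⟩
    linarith
end

section
/- Let E be a connected metric space and let g : E × ℝ → ℝ be continuous such that the map G : E × ℝ → E × ℝ defined by G(e,t) = (e, g(e,t)) is proper. Then there exist signs ε₊, ε₋ ∈ {+1, −1}, independent of e, such that for every e ∈ E: g(e,t) → +∞ as t → +∞ if ε₊ = +1 and g(e,t) → −∞ as t → +∞ if ε₊ = −1; and g(e,t) → +∞ as t → −∞ if ε₋ = +1 and g(e,t) → −∞ as t → −∞ if ε₋ = −1. -/
theorem aux_pos {E : Type*} [TopologicalSpace E]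
    (g : E × ℝ → ℝ) (hg : Continuous g)
    (H : ∀ (e₀ : E) (M : ℝ), ∃ T : ℝ, ∀ᶠ e in nhds e₀, ∀ t ≥ T, M < |g (e, t)|)
    (e₀ : E) (T : ℝ) (hT : ∀ᶠ e in nhds e₀, ∀ t ≥ T, 0 < |g (e, t)|) (h0 : 0 < g (e₀, T)) :
    ∀ᶠ e in nhds e₀, Filter.Tendsto (fun t => g (e, t)) Filter.atTop Filter.atTop := by
  have hc : Continuous fun e => g (e, T) := by fun_prop
  filter_upwards [hT, hc.continuousAt.eventually (lt_mem_nhds h0)] with e h1 h2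
  have hpos : ∀ t ≥ T, 0 < g (e, t) := by
    intro t ht
    by_contra! hn
    have hce : ContinuousOn (fun t => g (e, t)) (Set.Icc T t) := by fun_prop
    obtain ⟨s, hs, hs0⟩ := intermediate_value_Icc' ht hce ⟨hn, h2.le⟩
    have := h1 s hs.1
    simp only at hs0
    simp [hs0] at this
  rw [Filter.tendsto_atTop]
  intro M
  obtain ⟨T', hT'⟩ := H e M
  have h3 := hT'.self_of_nhds
  filter_upwards [Filter.eventually_ge_atTop T, Filter.eventually_ge_atTop T'] with t ht ht'
  have := h3 t ht'
  rw [abs_of_pos (hpos t ht)] at this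
  exact this.le

theorem aux_dich {E : Type*} [TopologicalSpace E] [ConnectedSpace E]
    (g : E × ℝ → ℝ) (hg : Continuous g)
    (H : ∀ (e₀ : E) (M : ℝ), ∃ T : ℝ, ∀ᶠ e in nhds e₀, ∀ t ≥ T, M < |g (e, t)|) :
    (∀ e : E, Filter.Tendsto (fun t => g (e, t)) Filter.atTop Filter.atTop) ∨
     (∀ e : E, Filter.Tendsto (fun t => g (e, t)) Filter.atTop Filter.atBot) := by
  have key : ∀ e₀ : E,
      (∀ᶠ e in nhds e₀, Filter.Tendsto (fun t => g (e, t)) Filter.atTop Filter.atTop) ∨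
      (∀ᶠ e in nhds e₀, Filter.Tendsto (fun t => g (e, t)) Filter.atTop Filter.atBot) := by
    intro e₀
    obtain ⟨T, hT⟩ := H e₀ 0
    have h0 := abs_pos.1 (hT.self_of_nhds T le_rfl)
    rcases lt_or_gt_of_ne h0 with h | h
    · right
      have := aux_pos (fun p => - g p) hg.neg (by simpa using H) e₀ T (by simpa using hT)
        (by simpa using h)
      filter_upwards [this] with e he
      exact Filter.tendsto_neg_atTop_iff.1 he
    · left
      exact aux_pos g hg H e₀ T hT h
  have disj : ∀ e, Filter.Tendsto (fun t => g (e, t)) Filter.atTop Filter.atTop →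
      ¬ Filter.Tendsto (fun t => g (e, t)) Filter.atTop Filter.atBot :=
    fun e h1 h2 => h1.not_tendsto Filter.disjoint_atTop_atBot h2
  have hclopen : IsClopen {e : E | Filter.Tendsto (fun t => g (e, t)) Filter.atTop Filter.atTop} := by
    constructor
    · rw [← isOpen_compl_iff, isOpen_iff_mem_nhds]
      intro e he
      rcases key e with h | h
      · exact absurd h.self_of_nhds he
      · filter_upwards [h] with x hx hx'
        exact disj x hx' hx
    · rw [isOpen_iff_mem_nhds]
      intro e he
      rcases key e with h | h
      · exact h
      · exact absurd h.self_of_nhds (disj e he)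
  rcases isClopen_iff.1 hclopen with h | h
  · right
    intro e
    rcases key e with h' | h'
    · have : e ∈ (∅ : Set E) := h ▸ h'.self_of_nhds
      exact this.elim
    · exact h'.self_of_nhds
  · left
    intro e
    have : e ∈ (Set.univ : Set E) := trivial
    rw [← h] at this
    exact this

theorem aux_bound {E : Type*} [MetricSpace E]
    (g : E × ℝ → ℝ) (hg : Continuous g)
    (G : E × ℝ → E × ℝ) (hG : ∀ p : E × ℝ, G p = (p.1, g p))
    (hproper : ∀ K : Set (E × ℝ), IsCompact K → IsCompact (G ⁻¹' K)) (e₀ : E) (M : ℝ) :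
    ∃ T : ℝ, ∀ᶠ e in nhds e₀, ∀ t, T ≤ |t| → M < |g (e, t)| := by
  have hGc : Continuous G := by
    rw [funext hG]
    fun_prop
  have hP : IsProperMap G := isProperMap_iff_isCompact_preimage.2 ⟨hGc, fun K hK => hproper K hK⟩
  have hK : IsCompact (({e₀} : Set E) ×ˢ Set.Icc (-M) M) := isCompact_singleton.prod isCompact_Icc
  have hK2 := (hproper _ hK).image (continuous_snd.abs)
  obtain ⟨B, hB⟩ := hK2.bddAbove
  refine ⟨B + 1, ?_⟩
  have hC : IsClosed {p : E × ℝ | B + 1 ≤ |p.2|} :=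
    isClosed_le continuous_const continuous_snd.abs
  have hW := (hP.isClosedMap _ hC).isOpen_compl
  have hsub : ({e₀} : Set E) ×ˢ Set.Icc (-M) M ⊆ (G '' {p : E × ℝ | B + 1 ≤ |p.2|})ᶜ := by
    rintro q hq ⟨p, hp, rfl⟩
    have : |p.2| ≤ B := hB ⟨p, hq, rfl⟩
    simp only [Set.mem_setOf_eq] at hp
    linarith
  obtain ⟨U, V, hU, hV, hU0, hV0, hUV⟩ :=
    generalized_tube_lemma isCompact_singleton isCompact_Icc hW hsub
  filter_upwards [hU.mem_nhds (hU0 rfl)] with e he t ht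
  by_contra! hn
  exact hUV (show (e, g (e, t)) ∈ U ×ˢ V from ⟨he, hV0 (abs_le.1 hn)⟩) ⟨(e, t), ht, hG _⟩

/-- If `G (e,t) = (e, g (e,t))` is a proper fiber-preserving continuous map on `E × ℝ`
with `E` a connected metric space, then the limits of `g (e, t)` as `t → +∞` and as
`t → -∞` are `+∞` or `-∞`, with signs independent of `e`. -/
theorem stmt6 {E : Type*} [MetricSpace E] [ConnectedSpace E]
    (g : E × ℝ → ℝ) (hg : Continuous g)
    (G : E × ℝ → E × ℝ) (hG : ∀ p : E × ℝ, G p = (p.1, g p))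
    (hproper : ∀ K : Set (E × ℝ), IsCompact K → IsCompact (G ⁻¹' K)) :
    ((∀ e : E, Filter.Tendsto (fun t => g (e, t)) Filter.atTop Filter.atTop) ∨
     (∀ e : E, Filter.Tendsto (fun t => g (e, t)) Filter.atTop Filter.atBot)) ∧
    ((∀ e : E, Filter.Tendsto (fun t => g (e, t)) Filter.atBot Filter.atTop) ∨
     (∀ e : E, Filter.Tendsto (fun t => g (e, t)) Filter.atBot Filter.atBot)) := by
  have HB := aux_bound g hg G hG hproper
  constructor
  · apply aux_dich g hg
    intro e₀ M
    obtain ⟨T, hT⟩ := HB e₀ M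
    refine ⟨T, ?_⟩
    filter_upwards [hT] with e he t ht
    exact he t (ht.le.trans (le_abs_self t))
  · have := aux_dich (fun p => g (p.1, -p.2)) (by fun_prop) (by
      intro e₀ M
      obtain ⟨T, hT⟩ := HB e₀ M
      refine ⟨T, ?_⟩
      filter_upwards [hT] with e he t ht
      exact he (-t) (by rw [abs_neg]; exact ht.le.trans (le_abs_self t)))
    refine this.imp (fun h e => ?_) (fun h e => ?_)
    · simpa [Function.comp_def] using (h e).comp Filter.tendsto_neg_atBot_atTop
    · simpa [Function.comp_def] using (h e).comp Filter.tendsto_neg_atBot_atTop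
end

section
/- Let E be a topological space and let g : E × ℝ → ℝ be continuous. Assume that for every e ∈ E there exists T(e) ∈ ℝ such that the function t ↦ g(e,t) is strictly increasing on (−∞, T(e)] and strictly decreasing on [T(e), ∞) (so g(e,·) attains its maximum exactly at T(e), and T(e) is uniquely determined). Then the function e ↦ T(e) is continuous on E, and the maximal-value function e ↦ g(e, T(e)) is continuous on E. -/
/-- If `g : E × ℝ → ℝ` is continuous and each height function `t ↦ g (e, t)` is strictly
unimodal with peak `T e` (strictly increasing on `(-∞, T e]`, strictly decreasing on
`[T e, ∞)`), then the peak location `e ↦ T e` and the maximal value `e ↦ g (e, T e)`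
are continuous. -/
theorem stmt7 {E : Type*} [TopologicalSpace E]
    (g : E × ℝ → ℝ) (hg : Continuous g) (T : E → ℝ)
    (hT : ∀ e : E, StrictMonoOn (fun t => g (e, t)) (Set.Iic (T e)) ∧
                   StrictAntiOn (fun t => g (e, t)) (Set.Ici (T e))) :
    Continuous T ∧ Continuous (fun e => g (e, T e)) := by
  have hc : Continuous T := by
    rw [continuous_iff_continuousAt]
    intro e₀
    have hcont : ∀ t : ℝ, Continuous (fun e : E => g (e, t)) := fun t =>
      hg.comp (continuous_id.prodMk continuous_const)
    refine tendsto_order.2 ⟨fun a ha => ?_, fun a ha => ?_⟩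
    · have h0 : g (e₀, a) < g (e₀, T e₀) := (hT e₀).1 (Set.mem_Iic.2 ha.le) Set.self_mem_Iic ha
      filter_upwards [(hcont a).continuousAt.eventually_lt (hcont (T e₀)).continuousAt h0]
        with e he
      by_contra hn
      rw [not_lt] at hn
      have h1 : g (e, T e₀) < g (e, a) :=
        (hT e).2 (Set.mem_Ici.2 hn) (Set.mem_Ici.2 (hn.trans ha.le)) ha
      exact lt_asymm he h1
    · have h0 : g (e₀, a) < g (e₀, T e₀) := (hT e₀).2 Set.self_mem_Ici (Set.mem_Ici.2 ha.le) ha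
      filter_upwards [(hcont a).continuousAt.eventually_lt (hcont (T e₀)).continuousAt h0]
        with e he
      by_contra hn
      rw [not_lt] at hn
      have h1 : g (e, T e₀) < g (e, a) :=
        (hT e).1 (Set.mem_Iic.2 (ha.le.trans hn)) (Set.mem_Iic.2 hn) ha
      exact lt_asymm he h1
  exact ⟨hc, hg.comp (continuous_id.prodMk hc)⟩
end

section
/- Let E be a real Banach space and let g : E × ℝ → ℝ be continuous such that the map G : E × ℝ → E × ℝ defined by G(e,t) = (e, g(e,t)) is proper. Assume the heights are normalized: for every e ∈ E, g(e,0) = 0, the function t ↦ g(e,t) is strictly increasing on (−∞, 0] and strictly decreasing on [0, ∞). Then the restriction of G to E × [0, ∞) is a homeomorphism onto E × (−∞, 0], and the restriction of G to E × (−∞, 0] is a homeomorphism onto E × (−∞, 0]. -/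
theorem aux_homeo_s9 {X Y : Type*} [TopologicalSpace X] [TopologicalSpace Y]
    (G : X → Y) (hc : Continuous G) (hcl : IsClosedMap G) (P : X → Prop) (Q : Y → Prop)
    (hP : IsClosed {x | P x}) (hm : ∀ x, P x → Q (G x))
    (hinj : ∀ x y, P x → P y → G x = G y → x = y)
    (hsurj : ∀ y, Q y → ∃ x, P x ∧ G x = y) :
    ∃ H : {x // P x} ≃ₜ {y // Q y}, ∀ x : {x // P x}, (H x : Y) = G x.val := by
  let f : {x // P x} → {y // Q y} := fun x => ⟨G x.1, hm x.1 x.2⟩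
  have hf : Continuous f := (hc.comp continuous_subtype_val).subtype_mk _
  have hb : Function.Bijective f := by
    refine ⟨fun x y h => Subtype.ext (hinj _ _ x.2 y.2 (congrArg Subtype.val h)), fun y => ?_⟩
    obtain ⟨x, hx, h⟩ := hsurj y.1 y.2
    exact ⟨⟨x, hx⟩, Subtype.ext h⟩
  have hfc : IsClosedMap f := by
    intro C hC
    have h1 : IsClosed (G '' (Subtype.val '' C)) :=
      hcl _ (hP.isClosedEmbedding_subtypeVal.isClosedMap _ hC)
    have h2 : f '' C = Subtype.val ⁻¹' (G '' (Subtype.val '' C)) := by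
      ext y
      constructor
      · rintro ⟨x, hx, rfl⟩
        exact ⟨x.1, ⟨x, hx, rfl⟩, rfl⟩
      · rintro ⟨_, ⟨x, hx, rfl⟩, h⟩
        exact ⟨x, hx, Subtype.ext h⟩
    rw [h2]
    exact h1.preimage continuous_subtype_val
  exact ⟨(Equiv.ofBijective f hb).toHomeomorphOfContinuousClosed hf hfc, fun x => rfl⟩

/-- Let `G (e,t) = (e, g (e,t))` be a proper fiber-preserving continuous map on `E × ℝ`
(`E` a real Banach space) with normalized heights: `g (e, 0) = 0`, `t ↦ g (e, t)` strictly
increasing on `(-∞, 0]` and strictly decreasing on `[0, ∞)`. Then the restriction of `G`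
to `E × [0, ∞)` is a homeomorphism onto `E × (-∞, 0]`, and the restriction of `G` to
`E × (-∞, 0]` is a homeomorphism onto `E × (-∞, 0]`. -/
theorem stmt9 {E : Type*} [NormedAddCommGroup E] [NormedSpace ℝ E] [CompleteSpace E]
    (g : E × ℝ → ℝ) (hg : Continuous g)
    (G : E × ℝ → E × ℝ) (hG : ∀ p : E × ℝ, G p = (p.1, g p))
    (hproper : ∀ K : Set (E × ℝ), IsCompact K → IsCompact (G ⁻¹' K))
    (h0 : ∀ e : E, g (e, 0) = 0)
    (hmono : ∀ e : E, StrictMonoOn (fun t => g (e, t)) (Set.Iic (0 : ℝ)))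
    (hanti : ∀ e : E, StrictAntiOn (fun t => g (e, t)) (Set.Ici (0 : ℝ))) :
    (∃ H : {p : E × ℝ // 0 ≤ p.2} ≃ₜ {p : E × ℝ // p.2 ≤ 0},
        ∀ x : {p : E × ℝ // 0 ≤ p.2}, (H x : E × ℝ) = G x.val) ∧
    (∃ H : {p : E × ℝ // p.2 ≤ 0} ≃ₜ {p : E × ℝ // p.2 ≤ 0},
        ∀ x : {p : E × ℝ // p.2 ≤ 0}, (H x : E × ℝ) = G x.val) := by
  have hGe : G = fun p => (p.1, g p) := funext hG
  have hc : Continuous G := by rw [hGe]; fun_prop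
  have hcl : IsClosedMap G :=
    (isProperMap_iff_isCompact_preimage.2 ⟨hc, fun K hK => hproper K hK⟩).isClosedMap
  have hle : ∀ e t, g (e, t) ≤ 0 := by
    intro e t
    rw [← h0 e]
    rcases le_total t 0 with h | h
    · exact (hmono e).monotoneOn h (Set.mem_Iic.2 le_rfl) h
    · exact (hanti e).antitoneOn (Set.mem_Ici.2 le_rfl) h h
  have hbd : ∀ e s, ∃ M : ℝ, 0 ≤ M ∧ ∀ t, M ≤ |t| → g (e, t) ≤ s := by
    intro e s
    have hK := (hproper ({e} ×ˢ Set.Icc s 0) (isCompact_singleton.prod isCompact_Icc)).image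
      continuous_snd
    obtain ⟨M, hM⟩ := hK.isBounded.exists_norm_le
    refine ⟨|M| + 1, by positivity, fun t ht => ?_⟩
    by_contra! hlt
    have := hM t ⟨(e, t), by simp [hG, hlt.le, hle], rfl⟩
    rw [Real.norm_eq_abs] at this
    linarith [le_abs_self M]
  have hge : ∀ e, Continuous fun t => g (e, t) := fun e => by fun_prop
  constructor
  · refine aux_homeo_s9 G hc hcl (fun p => 0 ≤ p.2) (fun p => p.2 ≤ 0)
      (isClosed_le continuous_const continuous_snd) (fun p _ => by simpa [hG] using hle p.1 p.2)
      ?_ ?_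
    · rintro ⟨e, t⟩ ⟨e', t'⟩ h h' heq
      simp only [hG, Prod.mk.injEq] at heq
      obtain ⟨rfl, heq⟩ := heq
      exact Prod.ext rfl ((hanti e).injOn h h' heq)
    · rintro ⟨e, s⟩ hs
      obtain ⟨M, hM0, hM⟩ := hbd e s
      obtain ⟨t, ht, h⟩ := intermediate_value_Icc' hM0 (hge e).continuousOn
        ⟨hM M (le_abs_self M), by simpa [h0] using hs⟩
      exact ⟨(e, t), ht.1, by rw [hG]; exact Prod.ext rfl h⟩
  · refine aux_homeo_s9 G hc hcl (fun p => p.2 ≤ 0) (fun p => p.2 ≤ 0)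
      (isClosed_le continuous_snd continuous_const) (fun p _ => by simpa [hG] using hle p.1 p.2)
      ?_ ?_
    · rintro ⟨e, t⟩ ⟨e', t'⟩ h h' heq
      simp only [hG, Prod.mk.injEq] at heq
      obtain ⟨rfl, heq⟩ := heq
      exact Prod.ext rfl ((hmono e).injOn h h' heq)
    · rintro ⟨e, s⟩ hs
      obtain ⟨M, hM0, hM⟩ := hbd e s
      obtain ⟨t, ht, h⟩ := intermediate_value_Icc (neg_nonpos.2 hM0) (hge e).continuousOn
        ⟨hM (-M) (by rw [abs_neg]; exact le_abs_self M), by simpa [h0] using hs⟩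
      exact ⟨(e, t), ht.2, by rw [hG]; exact Prod.ext rfl h⟩
end

section
/- Let E be a real Banach space and let g : E × ℝ → ℝ be continuous such that the map G : E × ℝ → E × ℝ defined by G(e,t) = (e, g(e,t)) is proper, and assume for every e ∈ E that g(e,0) = 0, t ↦ g(e,t) is strictly increasing on (−∞, 0] and strictly decreasing on [0, ∞). Define j : E × ℝ → E × ℝ by j(e,t) = (e, g(e,t)) for t ≤ 0 and j(e,t) = (e, −g(e,t)) for t ≥ 0. Then j is a homeomorphism of E × ℝ onto E × ℝ, and (G ∘ j⁻¹)(e,t) = (e, −|t|) for all (e,t) ∈ E × ℝ. -/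
/-- Let `G (e,t) = (e, g (e,t))` be a proper fiber-preserving continuous map on `E × ℝ`
(`E` a real Banach space) with normalized heights (`g (e, 0) = 0`, strictly increasing on
`(-∞, 0]`, strictly decreasing on `[0, ∞)`). Define `j (e,t) = (e, g (e,t))` for `t ≤ 0`
and `j (e,t) = (e, -g (e,t))` for `t ≥ 0`. Then `j` is a homeomorphism of `E × ℝ` onto
`E × ℝ` and `(G ∘ j⁻¹) (e, t) = (e, -|t|)`. -/
theorem stmt10 {E : Type*} [NormedAddCommGroup E] [NormedSpace ℝ E] [CompleteSpace E]
    (g : E × ℝ → ℝ) (hg : Continuous g)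
    (G : E × ℝ → E × ℝ) (hG : ∀ p : E × ℝ, G p = (p.1, g p))
    (hproper : ∀ K : Set (E × ℝ), IsCompact K → IsCompact (G ⁻¹' K))
    (h0 : ∀ e : E, g (e, 0) = 0)
    (hmono : ∀ e : E, StrictMonoOn (fun t => g (e, t)) (Set.Iic (0 : ℝ)))
    (hanti : ∀ e : E, StrictAntiOn (fun t => g (e, t)) (Set.Ici (0 : ℝ)))
    (j : E × ℝ → E × ℝ)
    (hj_neg : ∀ (e : E) (t : ℝ), t ≤ 0 → j (e, t) = (e, g (e, t)))
    (hj_pos : ∀ (e : E) (t : ℝ), 0 ≤ t → j (e, t) = (e, -g (e, t))) :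
    ∃ J : (E × ℝ) ≃ₜ (E × ℝ), (∀ p : E × ℝ, J p = j p) ∧
      ∀ (e : E) (t : ℝ), G (J.symm (e, t)) = (e, -|t|) := by
  have hle : ∀ e t, g (e, t) ≤ 0 := by
    intro e t
    rcases le_total t 0 with h | h
    · have := (hmono e).monotoneOn h (Set.mem_Iic.2 le_rfl) h
      simpa [h0] using this
    · have := (hanti e).antitoneOn (Set.mem_Ici.2 le_rfl) h h
      simpa [h0] using this
  obtain ⟨k, hk⟩ : ∃ k : E × ℝ → ℝ, k = fun p => if p.2 ≤ 0 then g p else - g p := ⟨_, rfl⟩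
  have hkc : Continuous k := by
    rw [hk]
    refine Continuous.if_le hg hg.neg continuous_snd continuous_const ?_
    rintro ⟨e, t⟩ h
    have h' : t = 0 := h
    subst h'
    simp [h0]
  have hkneg : ∀ e t, t ≤ 0 → k (e, t) = g (e, t) := by
    intro e t h
    simp [hk, h]
  have hkpos : ∀ e t, 0 ≤ t → k (e, t) = - g (e, t) := by
    intro e t h
    rcases h.eq_or_lt with h | h
    · subst h
      simp [hk, h0]
    · simp [hk, not_le.2 h]
  have hjk : ∀ p, j p = (p.1, k p) := by
    rintro ⟨e, t⟩
    rcases le_total t 0 with h | h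
    · rw [hj_neg e t h, hkneg e t h]
    · rw [hj_pos e t h, hkpos e t h]
  have hjc : Continuous j := by
    have : j = fun p => (p.1, k p) := funext hjk
    rw [this]
    fun_prop
  have hGc : Continuous G := by
    have : G = fun p => (p.1, g p) := funext hG
    rw [this]
    fun_prop
  have hgk : ∀ e t, g (e, t) = - |k (e, t)| := by
    intro e t
    rcases le_total t 0 with h | h
    · rw [hkneg e t h, abs_of_nonpos (hle e t), neg_neg]
    · rw [hkpos e t h, abs_neg, abs_of_nonpos (hle e t), neg_neg]
  have hcomp : (fun p : E × ℝ => (p.1, -|p.2|)) ∘ j = G := by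
    funext ⟨e, t⟩
    simp [hjk, hG, hgk]
  have hGp : IsProperMap G :=
    isProperMap_iff_isCompact_preimage.2 ⟨hGc, fun {K} hK => hproper K hK⟩
  have hjp : IsProperMap j := by
    refine isProperMap_of_comp_of_t2 hjc (g := fun p : E × ℝ => (p.1, -|p.2|)) (by fun_prop) ?_
    rw [hcomp]
    exact hGp
  have hkmono : ∀ e, StrictMono (fun t => k (e, t)) := by
    intro e
    refine StrictMonoOn.Iic_union_Ici (a := (0 : ℝ)) ?_ ?_
    · intro a ha b hb hab
      simp only [hkneg e a ha, hkneg e b hb]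
      exact hmono e ha hb hab
    · intro a ha b hb hab
      simp only [hkpos e a ha, hkpos e b hb]
      exact neg_lt_neg (hanti e ha hb hab)
  have hinj : Function.Injective j := by
    rintro ⟨e, t⟩ ⟨e', t'⟩ h
    rw [hjk, hjk] at h
    obtain ⟨h1, h2⟩ := Prod.mk.inj h
    have h1' : e = e' := h1
    subst h1'
    rw [(hkmono e).injective h2]
  have hbd : ∀ e (M : ℝ), ∃ B : ℝ, 0 ≤ B ∧ g (e, B) < -M ∧ g (e, -B) < -M := by
    intro e M
    have hK := hproper ({e} ×ˢ Set.Icc (-M) 0) (isCompact_singleton.prod isCompact_Icc)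
    obtain ⟨C, hC⟩ := (hK.image continuous_snd).isBounded.exists_norm_le
    have key : ∀ t, C < |t| → g (e, t) < -M := by
      intro t ht
      by_contra hcon
      have := hC t ⟨(e, t), by simp [hG, hle, not_lt.1 hcon], rfl⟩
      rw [Real.norm_eq_abs] at this
      linarith
    have hB : C < |(|C| + 1)| := by
      rw [abs_of_pos (by positivity)]
      linarith [le_abs_self C]
    exact ⟨|C| + 1, by positivity, key _ hB, key _ (by rwa [abs_neg])⟩
  have hsurj : Function.Surjective j := by
    rintro ⟨e, y⟩
    obtain ⟨B, hB0, h1, h2⟩ := hbd e |y|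
    have hc : Continuous (fun t => k (e, t)) := by fun_prop
    have h3 : k (e, -B) ≤ y := by
      rw [hkneg e _ (by linarith)]
      linarith [neg_abs_le y]
    have h4 : y ≤ k (e, B) := by
      rw [hkpos e _ hB0]
      linarith [le_abs_self y]
    obtain ⟨t, ht⟩ := mem_range_of_exists_le_of_exists_ge hc ⟨_, h3⟩ ⟨_, h4⟩
    exact ⟨(e, t), by rw [hjk]; exact Prod.ext rfl ht⟩
  let J : (E × ℝ) ≃ₜ (E × ℝ) :=
    (Equiv.ofBijective j ⟨hinj, hsurj⟩).toHomeomorphOfContinuousClosed hjc hjp.isClosedMap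
  have hJ : ∀ p, J p = j p := fun p => rfl
  refine ⟨J, hJ, fun e t => ?_⟩
  rw [← hcomp, Function.comp_apply, ← hJ, J.apply_symm_apply]
end
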